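/- arXiv:1203.0387 — 5 statements merged into one kernel-verified Lean document; each statement's English description precedes it below -/
import Mathlib

section
/- For every n×n complex matrix D, the dimension N(D) of its centralizer is congruent to n modulo 2; i.e. N(D) takes only odd values when n is odd and only even values when n is even. -/
/-!
The bilinear form `B(X, Y) = tr ((D X - X D) Y) = tr (D (X Y - Y X))` on `n × n` matrices is
alternating. Since the trace pairing is nondegenerate, its radical is exactly the centralizer of
`D`. An alternating form has even rank (`LinearMap.BilinForm.IsAlt.even_finrank_of_nondegenerate`, applied to
a complement of the radical), so `n ^ 2 - N(D)` is even, and `n ^ 2` has the parity of `n`.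
-/

/-- The Gram matrix `A` satisfies `Aᵀ = -A`, so `det A = (-1) ^ dim * det A`; as `det A ≠ 0` and
`2 ≠ 0`, the dimension is even. -/
lemma LinearMap.BilinForm.IsAlt.even_finrank_of_nondegenerate {V : Type*} [AddCommGroup V] [Module ℂ V]
    [FiniteDimensional ℂ V] {B : LinearMap.BilinForm ℂ V} (hB : B.IsAlt) (hn : B.Nondegenerate) :
    Even (Module.finrank ℂ V) := by
  let b := Module.finBasis ℂ V
  have hdet := (LinearMap.BilinForm.nondegenerate_iff_det_ne_zero b).mp hn
  have hskew : (BilinForm.toMatrix b B).transpose = -BilinForm.toMatrix b B := by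
    ext i j
    simp [BilinForm.toMatrix_apply, hB.neg_eq]
  have h := congrArg Matrix.det hskew
  rw [Matrix.det_transpose, Matrix.det_neg, Fintype.card_fin] at h
  by_contra hodd
  rw [(Nat.not_even_iff_odd.mp hodd).neg_one_pow, neg_one_mul, self_eq_neg] at h
  exact hdet h

lemma LinearMap.BilinForm.IsAlt.even_finrank_of_isCompl_ker {V : Type*} [AddCommGroup V] [Module ℂ V]
    [FiniteDimensional ℂ V] {B : LinearMap.BilinForm ℂ V} (hB : B.IsAlt) {W : Submodule ℂ V}
    (hW : IsCompl W (LinearMap.ker B)) : Even (Module.finrank ℂ W) := by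
  have halt : LinearMap.IsAlt (B.domRestrict₁₂ W W) := fun x => hB x
  refine LinearMap.BilinForm.IsAlt.even_finrank_of_nondegenerate halt ?_
  refine halt.isRefl.nondegenerate_iff_separatingLeft.mpr ?_
  rintro ⟨x, hx⟩ hxW
  have hker : x ∈ LinearMap.ker B := by
    rw [LinearMap.mem_ker]
    ext v
    obtain ⟨w, hw, k, hk, rfl⟩ : ∃ w ∈ W, ∃ k ∈ LinearMap.ker B, w + k = v :=
      Submodule.mem_sup.mp (hW.sup_eq_top ▸ Submodule.mem_top)
    have h₁ : B x w = 0 := hxW ⟨w, hw⟩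
    have h₂ : B x k = 0 := hB.isRefl k x (by rw [LinearMap.mem_ker.mp hk, LinearMap.zero_apply])
    simp [h₁, h₂]
  simpa using (Submodule.disjoint_def.mp hW.disjoint) x hx hker

/-- For every `n × n` complex matrix `D`, the dimension `N(D)` of the space of
matrices commuting with `D` is congruent to `n` modulo `2`. -/
theorem centralizer_dim_mod_two {n : ℕ} (D : Matrix (Fin n) (Fin n) ℂ) :
    Module.finrank ℂ
        (LinearMap.ker (LinearMap.mulLeft ℂ D - LinearMap.mulRight ℂ D)) % 2 =
      n % 2 := by
  let B : LinearMap.BilinForm ℂ (Matrix (Fin n) (Fin n) ℂ) :=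
    ((LinearMap.mul ℂ (Matrix (Fin n) (Fin n) ℂ)).compr₂ (Matrix.traceLinearMap (Fin n) ℂ ℂ)).comp
      (LinearMap.mulLeft ℂ D - LinearMap.mulRight ℂ D)
  have hB_apply (X Y : Matrix (Fin n) (Fin n) ℂ) : B X Y = ((D * X - X * D) * Y).trace := rfl
  have hB : B.IsAlt := fun X => by
    rw [hB_apply, sub_mul, Matrix.trace_sub, Matrix.trace_mul_comm (D * X) X, mul_assoc, sub_self]
  have hker : LinearMap.ker B =
      LinearMap.ker (LinearMap.mulLeft ℂ D - LinearMap.mulRight ℂ D) := by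
    ext X
    simp only [LinearMap.mem_ker, LinearMap.ext_iff, hB_apply, LinearMap.sub_apply,
      LinearMap.mulLeft_apply, LinearMap.mulRight_apply, LinearMap.zero_apply]
    rw [Matrix.ext_iff_trace_mul_right]
    simp
  obtain ⟨W, hW⟩ := Submodule.exists_isCompl (LinearMap.ker B)
  have hdim := Submodule.finrank_add_eq_of_isCompl hW
  obtain ⟨k, hk⟩ := hB.even_finrank_of_isCompl_ker hW.symm
  rw [hker, hk, Module.finrank_matrix, Fintype.card_fin, Module.finrank_self, mul_one] at hdim
  have hsq : n * n % 2 = n % 2 := by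
    rcases Nat.mod_two_eq_zero_or_one n with h | h <;> simp [Nat.mul_mod, h]
  omega
end

section
/- Let D be an n×n complex matrix (n ≥ 2) that is not a scalar matrix (D ≠ c • I_n for every c ∈ ℂ). Then N(D) ≤ n² − 2n + 2; i.e. the submaximal value of the centralizer dimension among n×n matrices is n² − 2n + 2. -/
/-!
By rank–nullity it suffices to show that `ad D : X ↦ D X - X D` has rank at least `2n - 2`.
As `D` is not scalar, there is a vector `v` with `v`, `D v` linearly independent, and hence a
covector `φ` with `φ v = 0` and `φ (D v) = 1`. The map `T (w, ψ) = ad D (w ⊗ φ + v ⊗ ψ)` has a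
domain of dimension `2n`, so it is enough that `dim ker T ≤ 2`. Evaluating `T (w, ψ) = 0` at `v`
gives `w = ψ(v) • D v - ψ(D v) • v`, so the first projection sends `ker T` into the plane spanned
by `v` and `D v` (`mem_span_of_commute`). This projection is injective on `ker T`: if `w = 0`, then
`ψ(x) • D v = ψ(D x) • v` for all `x`, which forces `ψ = 0` (`eq_zero_of_commute`).
-/

namespace CentralizerBound

open Matrix

variable {n : ℕ}

theorem exists_linearIndependent (D : Matrix (Fin n) (Fin n) ℂ)
    (hD : ∀ c : ℂ, D ≠ c • (1 : Matrix (Fin n) (Fin n) ℂ)) :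
    ∃ v : Fin n → ℂ, LinearIndependent ℂ ![v, D *ᵥ v] := by
  by_contra! h
  obtain ⟨a, ha⟩ := LinearMap.exists_eq_smul_id_of_forall_notLinearIndependent
    (f := Matrix.toLin' D) (fun v => by simpa using h v)
  refine hD a ((Matrix.toLin' (R := ℂ)).injective ?_)
  rw [ha, map_smul, Matrix.toLin'_one]
  rfl

theorem exists_covector {v u : Fin n → ℂ} (h : LinearIndependent ℂ ![v, u]) :
    ∃ φ : Fin n → ℂ, φ ⬝ᵥ v = 0 ∧ φ ⬝ᵥ u = 1 := by
  have hu : u ∉ Submodule.span ℂ {v} := by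
    intro hmem
    obtain ⟨a, ha⟩ := Submodule.mem_span_singleton.1 hmem
    have := (LinearIndependent.pair_iff.1 h a (-1) (by simp [ha])).2
    norm_num at this
  obtain ⟨f, hfu, hf⟩ := Submodule.exists_le_ker_of_notMem hu
  have hfv : f v = 0 := hf (Submodule.mem_span_singleton_self v)
  obtain ⟨φ, rfl⟩ := (dotProductEquiv ℂ (Fin n)).surjective f
  simp only [dotProductEquiv_apply_apply] at hfu hfv
  exact ⟨(φ ⬝ᵥ u)⁻¹ • φ, by simp [hfv], by simp [hfu]⟩

theorem mem_span_of_commute {D : Matrix (Fin n) (Fin n) ℂ} {v φ w ψ : Fin n → ℂ}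
    (hφv : φ ⬝ᵥ v = 0) (hφu : φ ⬝ᵥ (D *ᵥ v) = 1)
    (h : D * (vecMulVec w φ + vecMulVec v ψ) = (vecMulVec w φ + vecMulVec v ψ) * D) :
    w ∈ Submodule.span ℂ {v, D *ᵥ v} := by
  have h' := congrArg (fun M => M *ᵥ v) h
  simp only [← mulVec_mulVec, add_mulVec, vecMulVec_mulVec, hφv, hφu, op_smul_eq_smul, zero_smul,
    zero_add, one_smul, mulVec_smul] at h'
  rw [Submodule.mem_span_pair]
  refine ⟨-(ψ ⬝ᵥ (D *ᵥ v)), ψ ⬝ᵥ v, ?_⟩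
  rw [h', neg_smul]
  abel

theorem eq_zero_of_commute {D : Matrix (Fin n) (Fin n) ℂ} {v ψ : Fin n → ℂ}
    (hv : LinearIndependent ℂ ![v, D *ᵥ v])
    (h : D * vecMulVec v ψ = vecMulVec v ψ * D) : ψ = 0 := by
  refine dotProduct_eq_zero ψ fun x => ?_
  have h' := congrArg (fun M => M *ᵥ x) h
  simp only [← mulVec_mulVec, vecMulVec_mulVec, op_smul_eq_smul, mulVec_smul] at h'
  exact (LinearIndependent.pair_iff.1 hv (-(ψ ⬝ᵥ (D *ᵥ x))) (ψ ⬝ᵥ x) (by simp [h'])).2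

/-- The linear map `(w, ψ) ↦ w ⊗ φ + v ⊗ ψ`, with rank-one tensors written as `vecMulVec`. -/
noncomputable def rankOneSum (v φ : Fin n → ℂ) :
    ((Fin n → ℂ) × (Fin n → ℂ)) →ₗ[ℂ] Matrix (Fin n) (Fin n) ℂ where
  toFun p := vecMulVec p.1 φ + vecMulVec v p.2
  map_add' p q := by
    simp only [Prod.fst_add, Prod.snd_add, add_vecMulVec, vecMulVec_add]
    abel
  map_smul' c p := by
    simp [smul_vecMulVec, vecMulVec_smul]

end CentralizerBound

/-- If an `n × n` complex matrix `D` (`n ≥ 2`) is not a scalar matrix, then the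
dimension of its centralizer is at most the submaximal value `n² − 2n + 2`. -/
theorem centralizer_dim_submaximal_bound {n : ℕ} (hn : 2 ≤ n)
    (D : Matrix (Fin n) (Fin n) ℂ)
    (hD : ∀ c : ℂ, D ≠ c • (1 : Matrix (Fin n) (Fin n) ℂ)) :
    Module.finrank ℂ
        (LinearMap.ker (LinearMap.mulLeft ℂ D - LinearMap.mulRight ℂ D)) ≤
      n ^ 2 - 2 * n + 2 := by
  obtain ⟨v, hv⟩ := CentralizerBound.exists_linearIndependent D hD
  obtain ⟨φ, hφv, hφu⟩ := CentralizerBound.exists_covector hv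
  set A := LinearMap.mulLeft ℂ D - LinearMap.mulRight ℂ D with hA
  set T := A ∘ₗ CentralizerBound.rankOneSum v φ with hT
  have key : ∀ p ∈ LinearMap.ker T,
      D * (Matrix.vecMulVec p.1 φ + Matrix.vecMulVec v p.2) =
        (Matrix.vecMulVec p.1 φ + Matrix.vecMulVec v p.2) * D := by
    intro p hp
    exact sub_eq_zero.1 (LinearMap.mem_ker.1 hp)
  let P : LinearMap.ker T →ₗ[ℂ] Submodule.span ℂ {v, D.mulVec v} :=
    LinearMap.codRestrict _ (LinearMap.fst ℂ _ _ ∘ₗ (LinearMap.ker T).subtype)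
      fun p => CentralizerBound.mem_span_of_commute hφv hφu (key p p.2)
  have hP : Function.Injective P := by
    rw [← LinearMap.ker_eq_bot, LinearMap.ker_eq_bot']
    intro p hp
    have h1 : p.1.1 = 0 := congrArg Subtype.val hp
    have h2 := key p p.2
    rw [h1, Matrix.zero_vecMulVec, zero_add] at h2
    exact Subtype.ext (Prod.ext h1 (CentralizerBound.eq_zero_of_commute hv h2))
  have hker : Module.finrank ℂ (LinearMap.ker T) ≤ 2 := by
    classical
    refine (LinearMap.finrank_le_finrank_of_injective hP).trans
      ((finrank_span_le_card _).trans ?_)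
    simpa using Finset.card_le_two (a := v) (b := D.mulVec v)
  have hrange : Module.finrank ℂ (LinearMap.range T) ≤ Module.finrank ℂ (LinearMap.range A) :=
    Submodule.finrank_mono (LinearMap.range_comp_le_range _ _)
  have hrT := LinearMap.finrank_range_add_finrank_ker T
  have hrA := LinearMap.finrank_range_add_finrank_ker A
  simp only [Module.finrank_prod, Module.finrank_fin_fun] at hrT
  simp only [Module.finrank_matrix, Fintype.card_fin, Module.finrank_self, mul_one] at hrA
  rw [← pow_two] at hrA
  omega
end

section
/- Let D be an n×n complex matrix (n ≥ 2) that is not a scalar matrix. Then N(D) = n² − 2n + 2 if and only if there exists λ ∈ ℂ such that the matrix D − λ • I_n has rank 1; equivalently, if and only if D is similar either to J_λ² ⊕ λI_{n−2} or to λI_{n−1} ⊕ (μ) with μ ≠ λ. -/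
/-!
Write `k` and `r` for the nullity and the rank of an endomorphism `f` of an `n`-dimensional space.
An endomorphism `g` commuting with `f` preserves the range of `f`, and it restricts to zero there
exactly when `f g = g f = 0`. Such `g` form a copy of `Hom(V / range f, ker f)`, of dimension `k²`
(`finrank_annihilators`), so the commutant has dimension at most `k² + r²`
(`finrank_commutant_le`), with equality only if `f` acts as a scalar on its range
(`exists_scalar_on_range`).

If `r = 1`, the bound is `(n - 1)² + 1 = n² - 2n + 2`, and it is attained because the identity
commutes with `f` but does not annihilate it. Conversely, let the commutant of a non-scalar
`D` have this dimension, and apply the bound to `f = D - λ` for an eigenvalue `λ`. Since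
`k + r = n` and `k, r ≥ 1`, it forces `r = 1` or `k = 1`. In the second case the bound is an
equality, so `f` is a scalar `d` on its range, which is a hyperplane; hence `D - (λ + d)` kills a
hyperplane and has rank one (`exists_finrank_range_eq_one`).

For the normal forms, a matrix of rank one is `u vᵀ` with `u, v ≠ 0`, and `u vᵀ` is similar to
`u' v'ᵀ` as soon as `v ⬝ u = v' ⬝ u'` (`vecMulVec_similar`), the conjugating matrix being a product
of two matrices of the form `1 + z wᵀ`. Both normal forms are `λ + u' v'ᵀ` for suitable `u'`, `v'`:
the Jordan one covers `v ⬝ u = 0`, and the diagonal one with `μ - λ = v ⬝ u` covers `v ⬝ u ≠ 0`.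
-/

/-- The `n × n` matrix `J_λ² ⊕ λ I_{n−2}` (for `n ≥ 2`): `λ` on the diagonal and
a single `1` in position `(0,1)`. -/
def jordanTwoPlusScalar (n : ℕ) (lam : ℂ) : Matrix (Fin n) (Fin n) ℂ :=
  fun i j => if i = j then lam
    else if (i : ℕ) = 0 ∧ (j : ℕ) = 1 then 1 else 0

/-- The `n × n` diagonal matrix `λ I_{n−1} ⊕ (μ)`: diagonal entries all `λ`
except the last one, which is `μ`. -/
def scalarPlusOne (n : ℕ) (lam mu : ℂ) : Matrix (Fin n) (Fin n) ℂ :=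
  Matrix.diagonal (fun i : Fin n => if (i : ℕ) = n - 1 then mu else lam)

open Module

/-! ### The commutant of an endomorphism -/

section Endo
variable {K V : Type*} [Field K] [AddCommGroup V] [Module K V]

/-- The endomorphisms commuting with `f`, as a subspace of `End K V`. -/
def commutant (f : End K V) : Submodule K (End K V) :=
  LinearMap.ker (LinearMap.mulLeft K f - LinearMap.mulRight K f)

theorem mem_commutant {f g : End K V} : g ∈ commutant f ↔ ∀ x, f (g x) = g (f x) := by
  simp [commutant, sub_eq_zero, LinearMap.ext_iff]

theorem commutant_sub_smul (f : End K V) (c : K) : commutant (f - c • 1) = commutant f := by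
  ext g
  simp [mem_commutant]

/-- The two-sided annihilator of `f`: the endomorphisms `g` with `f g = 0` and `g f = 0`. -/
def annihilators (f : End K V) : Submodule K (End K V) :=
  LinearMap.ker (LinearMap.mulLeft K f) ⊓ LinearMap.ker (LinearMap.mulRight K f)

theorem mem_annihilators {f g : End K V} :
    g ∈ annihilators f ↔ (∀ x, f (g x) = 0) ∧ ∀ x, g (f x) = 0 := by
  simp [annihilators, LinearMap.ext_iff]

theorem annihilators_le_commutant (f : End K V) : annihilators f ≤ commutant f := fun g hg => by
  rw [mem_annihilators] at hg
  rw [mem_commutant]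
  intro x
  rw [hg.1, hg.2]

/-- Restriction of the endomorphisms commuting with `f` to the invariant subspace `range f`. -/
def restrictRange (f : End K V) :
    commutant f →ₗ[K] (LinearMap.range f →ₗ[K] LinearMap.range f) where
  toFun g := g.1.restrict (by
    rintro _ ⟨x, rfl⟩
    exact ⟨g.1 x, mem_commutant.1 g.2 x⟩)
  map_add' _ _ := rfl
  map_smul' _ _ := rfl

theorem restrictRange_apply (f : End K V) (g : commutant f) (y : LinearMap.range f) :
    (restrictRange f g y : V) = g.1 y := rfl

theorem ker_restrictRange (f : End K V) :
    LinearMap.ker (restrictRange f) = (annihilators f).comap (commutant f).subtype := by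
  ext g
  rw [LinearMap.mem_ker, Submodule.mem_comap, mem_annihilators]
  constructor
  · intro h
    have h2 : ∀ x, g.1 (f x) = 0 := fun x => by
      have := congrArg Subtype.val (LinearMap.congr_fun h ⟨f x, x, rfl⟩)
      simpa [restrictRange_apply] using this
    exact ⟨fun x => (mem_commutant.1 g.2 x).trans (h2 x), h2⟩
  · rintro ⟨-, h⟩
    ext ⟨_, x, rfl⟩
    simpa [restrictRange_apply] using h x

variable [FiniteDimensional K V]

/-- The two-sided annihilator of `f` is isomorphic to `Hom(V / range f, ker f)`. -/
theorem finrank_annihilators (f : End K V) :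
    finrank K (annihilators f) = finrank K (LinearMap.ker f) ^ 2 := by
  let T : ((V ⧸ LinearMap.range f) →ₗ[K] LinearMap.ker f) →ₗ[K] End K V :=
    { toFun := fun h => (LinearMap.ker f).subtype ∘ₗ h ∘ₗ (LinearMap.range f).mkQ
      map_add' := fun _ _ => rfl
      map_smul' := fun _ _ => rfl }
  have hT : Function.Injective T := fun a b hab => by
    ext x
    exact LinearMap.congr_fun hab x
  have hr : LinearMap.range T = annihilators f := by
    ext g
    rw [mem_annihilators]
    constructor
    · rintro ⟨h, rfl⟩
      refine ⟨fun x => (h _).2, fun x => ?_⟩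
      have : (LinearMap.range f).mkQ (f x) = 0 := by simp
      change ((h ((LinearMap.range f).mkQ (f x)) : LinearMap.ker f) : V) = 0
      rw [this, map_zero, Submodule.coe_zero]
    · rintro ⟨h1, h2⟩
      refine ⟨(LinearMap.range f).liftQ (g.codRestrict (LinearMap.ker f) h1) ?_, ?_⟩
      · rintro _ ⟨x, rfl⟩
        ext
        exact h2 x
      · ext x
        rfl
  have hq := (LinearMap.range f).finrank_quotient_add_finrank
  have hk := f.finrank_range_add_finrank_ker
  have : finrank K (V ⧸ LinearMap.range f) = finrank K (LinearMap.ker f) := by omega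
  rw [← hr, LinearMap.finrank_range_of_inj hT, finrank_linearMap, this, sq]

theorem finrank_commutant (f : End K V) :
    finrank K (commutant f) =
      finrank K (LinearMap.ker f) ^ 2 + finrank K (LinearMap.range (restrictRange f)) := by
  rw [← (restrictRange f).finrank_range_add_finrank_ker, ker_restrictRange,
    ← finrank_annihilators f, add_comm,
    (Submodule.comapSubtypeEquivOfLe (annihilators_le_commutant f)).finrank_eq]

theorem finrank_commutant_le (f : End K V) :
    finrank K (commutant f) ≤
      finrank K (LinearMap.ker f) ^ 2 + finrank K (LinearMap.range f) ^ 2 := by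
  rw [finrank_commutant]
  have := (LinearMap.range (restrictRange f)).finrank_le
  rw [finrank_linearMap] at this
  linarith [sq (finrank K (LinearMap.range f))]

/-- In the equality case of `finrank_commutant_le`, every endomorphism of `range f` extends to one
commuting with `f`, so the restriction of `f` to its range is central. -/
theorem exists_scalar_on_range {f : End K V} (h : finrank K (commutant f) =
    finrank K (LinearMap.ker f) ^ 2 + finrank K (LinearMap.range f) ^ 2) :
    ∃ c : K, ∀ y ∈ LinearMap.range f, f y = c • y := by
  rw [finrank_commutant, Nat.add_left_cancel_iff] at h
  have htop : LinearMap.range (restrictRange f) = ⊤ :=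
    Submodule.eq_top_of_finrank_eq (by rw [h, finrank_linearMap, sq])
  let f' : End K (LinearMap.range f) := f.restrict fun x _ => ⟨x, rfl⟩
  have hc : f' ∈ Set.center (End K (LinearMap.range f)) := by
    rw [Semigroup.mem_center_iff]
    intro g
    obtain ⟨g, rfl⟩ := LinearMap.range_eq_top.1 htop g
    ext y
    exact (mem_commutant.1 g.2 y).symm
  obtain ⟨c, _, hc⟩ := End.mem_center_iff.1 hc
  exact ⟨c, fun y hy => congrArg Subtype.val (LinearMap.congr_fun hc ⟨y, hy⟩)⟩

theorem finrank_commutant_of_rank_one {f : End K V}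
    (h : finrank K (LinearMap.range f) = 1) (hV : 2 ≤ finrank K V) :
    finrank K (commutant f) = (finrank K V - 1) ^ 2 + 1 := by
  have hk := f.finrank_range_add_finrank_ker
  have hk' : finrank K (LinearMap.ker f) = finrank K V - 1 := by omega
  apply le_antisymm
  · simpa [h, hk'] using finrank_commutant_le f
  · rw [← hk', ← finrank_annihilators f, Nat.succ_le_iff]
    apply Submodule.finrank_lt_finrank_of_lt
    refine lt_of_le_of_ne (annihilators_le_commutant f) fun he => ?_
    have h1 : (1 : End K V) ∈ annihilators f := by
      rw [he, mem_commutant]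
      simp
    have h0 : f = 0 := LinearMap.ext (mem_annihilators.1 h1).1
    rw [h0, LinearMap.range_zero, finrank_bot] at h
    omega

theorem exists_finrank_range_eq_one [IsAlgClosed K] {f : End K V} (hV : 2 ≤ finrank K V)
    (hf : ∀ c : K, f ≠ c • 1) (h : finrank K (commutant f) = (finrank K V - 1) ^ 2 + 1) :
    ∃ c : K, finrank K (LinearMap.range (f - c • 1)) = 1 := by
  have : Nontrivial V := nontrivial_of_finrank_pos (R := K) (by omega)
  obtain ⟨c, hc⟩ := End.exists_eigenvalue f
  set g := f - c • 1 with hg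
  have hcg : finrank K (commutant g) = (finrank K V - 1) ^ 2 + 1 := by
    rw [hg, commutant_sub_smul, h]
  have hpos : ∀ d : K, 1 ≤ finrank K (LinearMap.range (f - d • 1)) := fun d => by
    rw [Nat.one_le_iff_ne_zero, Ne, Submodule.finrank_eq_zero, LinearMap.range_eq_bot, sub_eq_zero]
    exact hf d
  have hr : 1 ≤ finrank K (LinearMap.range g) := hpos c
  have hk : 1 ≤ finrank K (LinearMap.ker g) := by
    obtain ⟨v, hv⟩ := hc.exists_hasEigenvector
    rw [Nat.one_le_iff_ne_zero, Ne, Submodule.finrank_eq_zero]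
    intro h0
    refine hv.2 ((Submodule.mem_bot K).1 (h0 ▸ ?_))
    simp [hg, hv.apply_eq_smul]
  have hn := g.finrank_range_add_finrank_ker
  have hle := finrank_commutant_le g
  rw [hcg] at hle
  generalize hkk : finrank K (LinearMap.ker g) = k at *
  generalize hrr : finrank K (LinearMap.range g) = r at *
  obtain ⟨k, rfl⟩ := Nat.exists_eq_add_of_le' hk
  obtain ⟨r, rfl⟩ := Nat.exists_eq_add_of_le' hr
  have hn1 : finrank K V - 1 = k + r + 1 := by omega
  rw [hn1] at hle hcg
  -- From here on `k` and `r` are the nullity and the rank of `g` minus one.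
  have hkr : k * r = 0 := by nlinarith
  rcases Nat.mul_eq_zero.1 hkr with rfl | rfl
  · obtain ⟨d, hd⟩ := exists_scalar_on_range (f := g) (by rw [hcg, hkk, hrr]; ring)
    refine ⟨c + d, le_antisymm ?_ (hpos _)⟩
    have hsub : LinearMap.range g ≤ LinearMap.ker (f - (c + d) • 1) := fun y hy => by
      have := hd y hy
      simp only [hg, LinearMap.sub_apply, LinearMap.smul_apply, End.one_apply] at this
      simp [add_smul, ← this]
    have h1 := Submodule.finrank_mono hsub
    have h2 := (f - (c + d) • 1).finrank_range_add_finrank_ker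
    omega
  · exact ⟨c, by rw [← hg, hrr]⟩

end Endo

/-! ### Similarity of rank-one matrices -/

namespace RankOne
open Matrix
variable {n : ℕ}

theorem exists_dotProduct_ne_zero {a : Fin n → ℂ} (ha : a ≠ 0) : ∃ z, a ⬝ᵥ z ≠ 0 := by
  by_contra! h
  exact ha (dotProduct_eq_zero a h)

/-- Two proper hyperplanes do not cover the space. -/
theorem exists_common {a b : Fin n → ℂ} (ha : a ≠ 0) (hb : b ≠ 0) :
    ∃ z, a ⬝ᵥ z = 1 ∧ b ⬝ᵥ z ≠ 0 := by
  suffices h : ∃ z, a ⬝ᵥ z ≠ 0 ∧ b ⬝ᵥ z ≠ 0 by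
    obtain ⟨z, h1, h2⟩ := h
    exact ⟨(a ⬝ᵥ z)⁻¹ • z, by simp [h1], by simp [h1, h2]⟩
  obtain ⟨x, hx⟩ := exists_dotProduct_ne_zero ha
  obtain ⟨y, hy⟩ := exists_dotProduct_ne_zero hb
  by_cases h1 : b ⬝ᵥ x = 0
  · by_cases h2 : a ⬝ᵥ y = 0
    · exact ⟨x + y, by simp [h2, hx], by simp [h1, hy]⟩
    · exact ⟨y, h2, hy⟩
  · exact ⟨x, hx, h1⟩

theorem isUnit_one_add_vecMulVec {z w : Fin n → ℂ} (h : 1 + w ⬝ᵥ z ≠ 0) :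
    IsUnit (1 + vecMulVec z w) := by
  rw [isUnit_iff_isUnit_det, vecMulVec_eq Unit, det_one_add_replicateCol_mul_replicateRow]
  exact h.isUnit

/-- With `w ⬝ u = 1` and `w ⬝ u' ≠ 0`, the matrix `1 + (u' - u) wᵀ` is the required one. -/
theorem exists_unit_mulVec {u u' : Fin n → ℂ} (hu : u ≠ 0) (hu' : u' ≠ 0) :
    ∃ P : (Matrix (Fin n) (Fin n) ℂ)ˣ, P.1 *ᵥ u = u' := by
  obtain ⟨w, h1, h2⟩ := exists_common hu hu'
  rw [dotProduct_comm] at h1 h2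
  obtain ⟨P, hP⟩ := isUnit_one_add_vecMulVec (z := u' - u) (w := w) (by simpa [h1] using h2)
  refine ⟨P, ?_⟩
  rw [hP, add_mulVec, one_mulVec, vecMulVec_mulVec, h1]
  simp

/-- With `a ⬝ z = 1` and `b ⬝ z ≠ 0`, the matrix `1 + z (b - a)ᵀ` is the required one. -/
theorem exists_unit_fix {u a b : Fin n → ℂ} (ha : a ≠ 0) (hb : b ≠ 0) (h : a ⬝ᵥ u = b ⬝ᵥ u) :
    ∃ P : (Matrix (Fin n) (Fin n) ℂ)ˣ, P.1 *ᵥ u = u ∧ a ᵥ* P.1 = b := by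
  obtain ⟨z, h1, h2⟩ := exists_common ha hb
  obtain ⟨P, hP⟩ := isUnit_one_add_vecMulVec (z := z) (w := b - a) (by simpa [h1] using h2)
  refine ⟨P, ?_, ?_⟩
  · rw [hP, add_mulVec, one_mulVec, vecMulVec_mulVec, sub_dotProduct, h]
    simp
  · rw [hP, vecMul_add, vecMul_one, vecMul_vecMulVec, h1]
    simp

theorem vecMulVec_similar {u v u' v' : Fin n → ℂ} (hu : u ≠ 0) (hv : v ≠ 0) (hu' : u' ≠ 0)
    (hv' : v' ≠ 0) (h : v ⬝ᵥ u = v' ⬝ᵥ u') :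
    ∃ P : (Matrix (Fin n) (Fin n) ℂ)ˣ,
      vecMulVec u v = (↑P⁻¹ : Matrix (Fin n) (Fin n) ℂ) * vecMulVec u' v' * P.1 := by
  obtain ⟨P, hP⟩ := exists_unit_mulVec hu hu'
  have hne : v' ᵥ* P.1 ≠ 0 := fun h0 => hv' <| by
    have := congrArg (· ᵥ* (↑P⁻¹ : Matrix (Fin n) (Fin n) ℂ)) h0
    simpa [vecMul_vecMul] using this
  obtain ⟨Q, hQ, hQ'⟩ := exists_unit_fix (u := u) hne hv (by rw [h, ← dotProduct_mulVec, hP])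
  refine ⟨P * Q, ?_⟩
  have : (P * Q).1 *ᵥ u = u' := by rw [Units.val_mul, ← mulVec_mulVec, hQ, hP]
  rw [mul_assoc, vecMulVec_mul, Units.val_mul, ← vecMul_vecMul, hQ', ← this, ← mul_vecMulVec,
    Units.inv_mul_cancel_left]

theorem rank_eq_one_iff {A : Matrix (Fin n) (Fin n) ℂ} :
    A.rank = 1 ↔ ∃ u v : Fin n → ℂ, u ≠ 0 ∧ v ≠ 0 ∧ A = vecMulVec u v := by
  constructor
  · intro h
    obtain ⟨⟨u, _⟩, hu, h⟩ := finrank_eq_one_iff'.1 h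
    choose c hc using fun j : Fin n => h ⟨A *ᵥ Pi.single j 1, _, rfl⟩
    have hA : A = vecMulVec u c := by
      ext i j
      have := congrFun (congrArg Subtype.val (hc j)) i
      simp at this
      rw [vecMulVec_apply, ← this, mul_comm]
    refine ⟨u, c, fun h0 => hu (Subtype.ext h0), ?_, hA⟩
    rintro rfl
    have h0 : A = 0 := by rw [hA]; simp
    simp_all
  · rintro ⟨u, v, hu, hv, rfl⟩
    refine le_antisymm (rank_vecMulVec_le u v) ?_
    rw [Nat.one_le_iff_ne_zero]
    intro h0
    have h0 := LinearMap.range_eq_bot.1 (Submodule.finrank_eq_zero.1 h0)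
    have : vecMulVec u v = 0 := by
      ext i j
      simpa using congrFun (LinearMap.congr_fun h0 (Pi.single j 1)) i
    simp_all

theorem rank_conj (P : (Matrix (Fin n) (Fin n) ℂ)ˣ) (A : Matrix (Fin n) (Fin n) ℂ) :
    ((↑P⁻¹ : Matrix (Fin n) (Fin n) ℂ) * A * P.1).rank = A.rank := by
  rw [rank_mul_eq_left_of_isUnit_det _ _ ((isUnit_iff_isUnit_det _).1 P.isUnit),
    rank_mul_eq_right_of_isUnit_det _ _ ((isUnit_iff_isUnit_det _).1 P⁻¹.isUnit)]

theorem conj_sub_smul_one (P : (Matrix (Fin n) (Fin n) ℂ)ˣ) (A : Matrix (Fin n) (Fin n) ℂ)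
    (c : ℂ) : (↑P⁻¹ : Matrix (Fin n) (Fin n) ℂ) * (A - c • 1) * P.1 =
      (↑P⁻¹ : Matrix (Fin n) (Fin n) ℂ) * A * P.1 - c • 1 := by
  simp [mul_sub, sub_mul]

theorem jordanTwoPlusScalar_sub (hn : 2 ≤ n) (lam : ℂ) :
    jordanTwoPlusScalar n lam - lam • 1 =
      vecMulVec (Pi.single ⟨0, by omega⟩ 1) (Pi.single ⟨1, by omega⟩ 1) := by
  ext i j
  simp only [jordanTwoPlusScalar, Matrix.sub_apply, Matrix.smul_apply, one_apply, vecMulVec_apply,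
    Pi.single_apply, Fin.ext_iff]
  split_ifs <;> first | omega | simp

theorem scalarPlusOne_sub (hn : 2 ≤ n) (lam mu : ℂ) :
    scalarPlusOne n lam mu - lam • 1 =
      vecMulVec (Pi.single ⟨n - 1, by omega⟩ (mu - lam)) (Pi.single ⟨n - 1, by omega⟩ 1) := by
  ext i j
  simp only [scalarPlusOne, Matrix.sub_apply, Matrix.smul_apply, one_apply, vecMulVec_apply, diagonal_apply,
    Pi.single_apply, Fin.ext_iff]
  split_ifs <;> first | omega | simp

theorem exists_rank_eq_one_iff (hn : 2 ≤ n) (D : Matrix (Fin n) (Fin n) ℂ) :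
    (∃ lam : ℂ, (D - lam • (1 : Matrix (Fin n) (Fin n) ℂ)).rank = 1) ↔
      ∃ (P : (Matrix (Fin n) (Fin n) ℂ)ˣ) (lam : ℂ),
        D = (↑P⁻¹ : Matrix (Fin n) (Fin n) ℂ) * jordanTwoPlusScalar n lam * P.1 ∨
        ∃ mu : ℂ, mu ≠ lam ∧
          D = (↑P⁻¹ : Matrix (Fin n) (Fin n) ℂ) * scalarPlusOne n lam mu * P.1 := by
  constructor
  · rintro ⟨lam, h⟩
    obtain ⟨u, v, hu, hv, hA⟩ := rank_eq_one_iff.1 h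
    by_cases hc : v ⬝ᵥ u = 0
    · obtain ⟨P, hP⟩ := vecMulVec_similar hu hv
        (u' := Pi.single ⟨0, by omega⟩ 1) (v' := Pi.single ⟨1, by omega⟩ 1)
        (by simp) (by simp) (by simp [hc])
      rw [← hA, ← jordanTwoPlusScalar_sub hn lam, conj_sub_smul_one] at hP
      exact ⟨P, lam, Or.inl (sub_left_injective hP)⟩
    · obtain ⟨P, hP⟩ := vecMulVec_similar hu hv
        (u' := Pi.single ⟨n - 1, by omega⟩ (lam + v ⬝ᵥ u - lam))
        (v' := Pi.single ⟨n - 1, by omega⟩ 1)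
        (by simpa using hc) (by simp) (by simp)
      rw [← hA, ← scalarPlusOne_sub hn, conj_sub_smul_one] at hP
      exact ⟨P, lam, Or.inr ⟨lam + v ⬝ᵥ u, by simpa using hc, sub_left_injective hP⟩⟩
  · rintro ⟨P, lam, rfl | ⟨mu, hmu, rfl⟩⟩
    · refine ⟨lam, ?_⟩
      rw [← conj_sub_smul_one, rank_conj, jordanTwoPlusScalar_sub hn, rank_eq_one_iff]
      exact ⟨_, _, by simp, by simp, rfl⟩
    · refine ⟨lam, ?_⟩
      rw [← conj_sub_smul_one, rank_conj, scalarPlusOne_sub hn, rank_eq_one_iff]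
      exact ⟨_, _, by simpa [sub_eq_zero] using hmu, by simp, rfl⟩

end RankOne

/-! ### Passing from matrices to endomorphisms -/

theorem finrank_commutant_toLin {n : ℕ} (D : Matrix (Fin n) (Fin n) ℂ) :
    finrank ℂ (LinearMap.ker (LinearMap.mulLeft ℂ D - LinearMap.mulRight ℂ D)) =
      finrank ℂ (commutant (Matrix.toLinAlgEquiv' D)) := by
  have h : LinearMap.ker (LinearMap.mulLeft ℂ D - LinearMap.mulRight ℂ D) =
      (commutant (Matrix.toLinAlgEquiv' D)).comap
        (Matrix.toLinAlgEquiv' (R := ℂ) (n := Fin n)).toLinearEquiv.toLinearMap := by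
    ext H
    simp [commutant, sub_eq_zero, ← map_mul]
  rw [h]
  exact (LinearEquiv.ofSubmodule' _ _).finrank_eq

theorem rank_sub_smul_one {n : ℕ} (D : Matrix (Fin n) (Fin n) ℂ) (c : ℂ) :
    (D - c • (1 : Matrix (Fin n) (Fin n) ℂ)).rank =
      finrank ℂ (LinearMap.range (Matrix.toLinAlgEquiv' D - c • 1)) := by
  have : Matrix.toLinAlgEquiv' D - c • 1 =
      Matrix.toLinAlgEquiv' (D - c • (1 : Matrix (Fin n) (Fin n) ℂ)) := by
    rw [map_sub, map_smul, map_one]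
  rw [this]
  rfl

theorem finrank_eq_iff_exists_rank {n : ℕ} (hn : 2 ≤ n) (D : Matrix (Fin n) (Fin n) ℂ)
    (hD : ∀ c : ℂ, D ≠ c • (1 : Matrix (Fin n) (Fin n) ℂ)) :
    finrank ℂ (LinearMap.ker (LinearMap.mulLeft ℂ D - LinearMap.mulRight ℂ D)) =
        n ^ 2 - 2 * n + 2 ↔
      ∃ lam : ℂ, (D - lam • (1 : Matrix (Fin n) (Fin n) ℂ)).rank = 1 := by
  have hdim : finrank ℂ (Fin n → ℂ) = n := by simp
  have hnum : n ^ 2 - 2 * n + 2 = (finrank ℂ (Fin n → ℂ) - 1) ^ 2 + 1 := by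
    obtain ⟨m, rfl⟩ := Nat.exists_eq_add_of_le' hn
    rw [hdim, show (m + 2) ^ 2 = m ^ 2 + 2 * m + 2 * (m + 2) by ring, Nat.add_sub_cancel,
      show m + 2 - 1 = m + 1 by omega]
    ring
  simp only [finrank_commutant_toLin, rank_sub_smul_one, hnum]
  constructor
  · refine exists_finrank_range_eq_one (by rw [hdim]; exact hn) fun c hc => hD c ?_
    apply Matrix.toLinAlgEquiv'.injective
    rw [hc, map_smul, map_one]
  · rintro ⟨c, hc⟩
    rw [← commutant_sub_smul _ c]
    exact finrank_commutant_of_rank_one hc (by rw [hdim]; exact hn)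

/-- For a non-scalar `n × n` complex matrix `D` (`n ≥ 2`), the centralizer of `D`
has the submaximal dimension `n² − 2n + 2` if and only if `D − λ I` has rank `1`
for some `λ ∈ ℂ`, equivalently, if and only if `D` is similar either to
`J_λ² ⊕ λ I_{n−2}` or to `λ I_{n−1} ⊕ (μ)` with `μ ≠ λ`. -/
theorem centralizer_dim_eq_submaximal_iff {n : ℕ} (hn : 2 ≤ n)
    (D : Matrix (Fin n) (Fin n) ℂ)
    (hD : ∀ c : ℂ, D ≠ c • (1 : Matrix (Fin n) (Fin n) ℂ)) :
    (Module.finrank ℂ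
        (LinearMap.ker (LinearMap.mulLeft ℂ D - LinearMap.mulRight ℂ D)) =
        n ^ 2 - 2 * n + 2 ↔
      ∃ lam : ℂ, (D - lam • (1 : Matrix (Fin n) (Fin n) ℂ)).rank = 1) ∧
    (Module.finrank ℂ
        (LinearMap.ker (LinearMap.mulLeft ℂ D - LinearMap.mulRight ℂ D)) =
        n ^ 2 - 2 * n + 2 ↔
      ∃ (P : (Matrix (Fin n) (Fin n) ℂ)ˣ) (lam : ℂ),
        D = (↑P⁻¹ : Matrix (Fin n) (Fin n) ℂ) * jordanTwoPlusScalar n lam * (↑P : Matrix (Fin n) (Fin n) ℂ) ∨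
        ∃ mu : ℂ, mu ≠ lam ∧ D = (↑P⁻¹ : Matrix (Fin n) (Fin n) ℂ) * scalarPlusOne n lam mu * (↑P : Matrix (Fin n) (Fin n) ℂ)) := by
  exact ⟨finrank_eq_iff_exists_rank hn D hD,
    (finrank_eq_iff_exists_rank hn D hD).trans (RankOne.exists_rank_eq_one_iff hn D)⟩
end

section
/- Let A and H be n×n complex matrices and let c ∈ ℂ with c ≠ 0. If A·H − H·A = c • A, then A is nilpotent. (Hence the matrix equation J H − H J = κ J with κ ≠ 0 is compatible only when J is a nilpotent matrix.) -/
/-!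
The operator `D X = X H - H X` on `n × n` matrices is a derivation with `D A = c • A`, so
`D (A ^ k) = (k * c) • A ^ k` for all `k`. If `A` were not nilpotent, every `A ^ k` would be an
eigenvector, and `D` would have the infinitely many distinct eigenvalues `k * c`; this is
impossible on a finite-dimensional space.
-/

/-- The Leibniz rule for the commutator with `H`, applied to powers of `A`. -/
lemma pow_mul_sub_mul_pow {n : ℕ} {A H : Matrix (Fin n) (Fin n) ℂ} {c : ℂ}
    (h : A * H - H * A = c • A) (k : ℕ) :
    A ^ k * H - H * A ^ k = ((k : ℂ) * c) • A ^ k := by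
  induction k with
  | zero => simp
  | succ k ih =>
    calc A ^ (k + 1) * H - H * A ^ (k + 1)
        = A ^ k * (A * H - H * A) + (A ^ k * H - H * A ^ k) * A := by
          rw [pow_succ]; noncomm_ring
      _ = (((k + 1 : ℕ) : ℂ) * c) • A ^ (k + 1) := by
          rw [h, ih, mul_smul_comm, smul_mul_assoc, ← pow_succ, ← add_smul]
          congr 1
          push_cast
          ring

/-- If `A H − H A = c • A` for some nonzero scalar `c`, then `A` is nilpotent.
Hence the matrix equation `J H − H J = κ J` with `κ ≠ 0` is compatible only
for nilpotent `J`. -/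
theorem nilpotent_of_comm_eq_smul_self {n : ℕ}
    (A H : Matrix (Fin n) (Fin n) ℂ) (c : ℂ) (hc : c ≠ 0)
    (h : A * H - H * A = c • A) : IsNilpotent A := by
  by_contra hA
  let D : Module.End ℂ (Matrix (Fin n) (Fin n) ℂ) :=
    LinearMap.mulRight ℂ H - LinearMap.mulLeft ℂ H
  have hD (k : ℕ) : D.HasEigenvalue ((k : ℂ) * c) := by
    refine Module.End.hasEigenvalue_of_hasEigenvector (x := A ^ k)
      ⟨Module.End.mem_eigenspace_iff.mpr ?_, fun h0 => hA ⟨k, h0⟩⟩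
    simpa [D] using pow_mul_sub_mul_pow h k
  have hinj : Function.Injective fun k : ℕ => (k : ℂ) * c := fun i j hij =>
    Nat.cast_injective (mul_right_cancel₀ hc hij)
  exact Set.infinite_of_injective_forall_mem hinj hD D.finite_hasEigenvalue
end

section
/- Let A be a nilpotent n×n complex matrix. Then there exists an n×n complex matrix H such that A·H − H·A = A. (Hence for nilpotent J the matrix equation J H − H J = κ J is compatible for every κ ∈ ℂ.) -/
/-!
The argument is duality for the trace form. If `A` were not in the range of `X ↦ A X - X A`, some
linear functional would vanish on that range but not at `A`. Every functional on matrices has the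
form `X ↦ tr (B X)`; vanishing on the range says `tr ((B A - A B) X) = 0` for all `X`, so `B`
commutes with `A`. Then `B A` is nilpotent, hence `tr (B A) = 0`, a contradiction.
-/

/-- The trace form represents every linear functional on square matrices. -/
lemma exists_trace_mul_eq {n : ℕ} (f : Matrix (Fin n) (Fin n) ℂ →ₗ[ℂ] ℂ) :
    ∃ B : Matrix (Fin n) (Fin n) ℂ, ∀ X, f X = (B * X).trace := by
  refine ⟨Matrix.of fun i j => f (Matrix.single j i 1), fun X => ?_⟩
  have h : f = (Matrix.traceLinearMap (Fin n) ℂ ℂ).comp (LinearMap.mulLeft ℂ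
      (Matrix.of fun i j => f (Matrix.single j i 1))) := by
    refine Matrix.ext_linearMap ℂ fun i j => LinearMap.ext_ring ?_
    simp [Matrix.trace_mul_single]
  exact LinearMap.congr_fun h X

/-- For every nilpotent `n × n` complex matrix `A` there exists a matrix `H`
with `A H − H A = A`; hence for nilpotent `J` the equation `J H − H J = κ J`
is compatible for every `κ`. -/
theorem exists_comm_eq_self_of_nilpotent {n : ℕ}
    (A : Matrix (Fin n) (Fin n) ℂ) (hA : IsNilpotent A) :
    ∃ H : Matrix (Fin n) (Fin n) ℂ, A * H - H * A = A := by
  by_contra hne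
  let ad : Matrix (Fin n) (Fin n) ℂ →ₗ[ℂ] Matrix (Fin n) (Fin n) ℂ :=
    LinearMap.mulLeft ℂ A - LinearMap.mulRight ℂ A
  have hmem : A ∉ LinearMap.range ad := fun ⟨H, hH⟩ => hne ⟨H, by simpa [ad] using hH⟩
  obtain ⟨f, hfA, hf⟩ := Submodule.exists_le_ker_of_notMem hmem
  obtain ⟨B, hB⟩ := exists_trace_mul_eq f
  have hcomm : B * A = A * B := by
    refine Matrix.ext_iff_trace_mul_right.mpr fun X => ?_
    have h0 : f (A * X - X * A) = 0 := hf ⟨X, by simp [ad]⟩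
    rw [hB, mul_sub, Matrix.trace_sub, sub_eq_zero] at h0
    rw [mul_assoc, h0, ← mul_assoc, Matrix.trace_mul_comm, ← mul_assoc]
  have hnil : IsNilpotent (B * A) := Commute.isNilpotent_mul_left hcomm hA
  exact hfA (by rw [hB]; exact (Matrix.isNilpotent_trace_of_isNilpotent hnil).eq_zero)
end
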